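/- Let R be a commutative noetherian ring and f a grade consistent function on Spec R. Then for each prime ideal p of R there exists a finitely generated R-module E such that pd_R E < ∞, pd_{R_q} E_q ≤ f(q) for all primes q, and pd_{R_p} E_p = f(p). -/

import Mathlib

universe u

open CategoryTheory

namespace ResolvPaper

variable (R : Type u) [CommRing R]

/-- `IsSES f g` means `0 → A → B → C → 0` is a short exact sequence. -/
def IsSES {R : Type u} [CommRing R] {A B C : Type u} [AddCommGroup A] [Module R A]
    [AddCommGroup B] [Module R B] [AddCommGroup C] [Module R C]
    (f : A →ₗ[R] B) (g : B →ₗ[R] C) : Prop :=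
  Function.Injective f ∧ Function.Surjective g ∧ LinearMap.range f = LinearMap.ker g

/-- A resolving subcategory of `mod R`, viewed as a set of bundled modules
closed under isomorphism, containing the finitely generated projective modules, and closed
under direct summands, extensions and syzygies. -/
structure IsResolving (𝒳 : Set (ModuleCat.{u} R)) : Prop where
  fg : ∀ M ∈ 𝒳, Module.Finite R M
  iso_closed : ∀ M N : ModuleCat.{u} R, Nonempty (M ≃ₗ[R] N) → M ∈ 𝒳 → N ∈ 𝒳
  proj_mem : ∀ M : ModuleCat.{u} R, Module.Finite R M → Module.Projective R M → M ∈ 𝒳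
  summand_closed : ∀ M N : ModuleCat.{u} R, ModuleCat.of R (↥M × ↥N) ∈ 𝒳 → M ∈ 𝒳
  ext_closed : ∀ (A B C : ModuleCat.{u} R) (f : A →ₗ[R] B) (g : B →ₗ[R] C),
    IsSES f g → A ∈ 𝒳 → C ∈ 𝒳 → B ∈ 𝒳
  syzygy_closed : ∀ (K P M : ModuleCat.{u} R) (f : K →ₗ[R] P) (g : P →ₗ[R] M),
    IsSES f g → Module.Finite R K → Module.Finite R P → Module.Projective R P →
    M ∈ 𝒳 → K ∈ 𝒳

/-- The resolving closure: the smallest resolving subcategory containing `S`. -/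
def resClosure (S : Set (ModuleCat.{u} R)) : Set (ModuleCat.{u} R) :=
  ⋂₀ {𝒳 | IsResolving R 𝒳 ∧ S ⊆ 𝒳}

/-- An extension-closed subcategory of `mod R`: closed under isomorphism,
direct summands and extensions. -/
def IsExtClosed (𝒳 : Set (ModuleCat.{u} R)) : Prop :=
  (∀ M N : ModuleCat.{u} R, Nonempty (M ≃ₗ[R] N) → M ∈ 𝒳 → N ∈ 𝒳) ∧
  (∀ M N : ModuleCat.{u} R, ModuleCat.of R (↥M × ↥N) ∈ 𝒳 → M ∈ 𝒳) ∧
  (∀ (A B C : ModuleCat.{u} R) (f : A →ₗ[R] B) (g : B →ₗ[R] C),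
    IsSES f g → A ∈ 𝒳 → C ∈ 𝒳 → B ∈ 𝒳)

/-- The extension closure of a set of modules. -/
def extClosure (S : Set (ModuleCat.{u} R)) : Set (ModuleCat.{u} R) :=
  ⋂₀ {𝒳 | IsExtClosed R 𝒳 ∧ S ⊆ 𝒳}

/-- `add R`: direct summands of finite free modules. -/
def addR : Set (ModuleCat.{u} R) :=
  {M | ∃ (n : ℕ) (N : ModuleCat.{u} R), Nonempty ((↥M × ↥N) ≃ₗ[R] (Fin n → R))}

/-- `pdLE n M` : the projective dimension of `M` is at most `n`. -/
def pdLE : ℕ → ModuleCat.{u} R → Prop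
  | 0, M => Module.Projective R M
  | n+1, M => ∃ (K P : ModuleCat.{u} R) (f : K →ₗ[R] P) (g : P →ₗ[R] M),
      Module.Finite R P ∧ Module.Projective R P ∧ IsSES f g ∧ pdLE n K

/-- The projective dimension, an element of `WithBot ℕ∞`; the zero module
has projective dimension `⊥ = -∞`. -/
noncomputable def pdim (M : ModuleCat.{u} R) : WithBot ℕ∞ :=
  sInf {x : WithBot ℕ∞ | (x = ⊥ ∧ Subsingleton M) ∨ ∃ n : ℕ, x = (n : ℕ∞) ∧ pdLE R n M}

/-- The depth of `M` with respect to the ideal `I`: the supremum of lengths of weakly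
`M`-regular sequences contained in `I`.  The zero module has depth `∞`. -/
noncomputable def depthE (I : Ideal R) (M : Type u) [AddCommGroup M] [Module R M] : ℕ∞ :=
  sSup {x : ℕ∞ | ∃ rs : List R, (∀ r ∈ rs, r ∈ I) ∧
    RingTheory.Sequence.IsWeaklyRegular M rs ∧ x = rs.length}

/-- The grade of an ideal: the length of a maximal `R`-regular sequence in `I`. -/
noncomputable def gradeE (I : Ideal R) : ℕ∞ := depthE R I R

/-- A grade consistent function on `Spec R`. -/
def GradeConsistent (f : PrimeSpectrum R → ℕ) : Prop :=
  (∀ p : PrimeSpectrum R, (f p : ℕ∞) ≤ gradeE R p.asIdeal) ∧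
  (∀ p q : PrimeSpectrum R, p.asIdeal ≤ q.asIdeal → f p ≤ f q)

/-- The localization of a module at a prime, as a module over the local ring `R_p`. -/
noncomputable abbrev localizeM (p : PrimeSpectrum R) (M : ModuleCat.{u} R) :
    ModuleCat.{u} (Localization.AtPrime p.asIdeal) :=
  ModuleCat.of (Localization.AtPrime p.asIdeal) (LocalizedModule p.asIdeal.primeCompl M)

/-- `pd_{R_p} M_p`. -/
noncomputable def localPdim (p : PrimeSpectrum R) (M : ModuleCat.{u} R) : WithBot ℕ∞ :=
  pdim (Localization.AtPrime p.asIdeal) (localizeM R p M)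

/-- `depth_{R_p} M_p`. -/
noncomputable def localDepth (p : PrimeSpectrum R) (M : ModuleCat.{u} R) : ℕ∞ :=
  depthE (Localization.AtPrime p.asIdeal)
    (IsLocalRing.maximalIdeal (Localization.AtPrime p.asIdeal))
    (LocalizedModule p.asIdeal.primeCompl M)

/-- The height of a prime ideal. -/
noncomputable def heightE (p : PrimeSpectrum R) : ℕ∞ := Order.height p

/-- `PD(R)` : finitely generated modules of finite projective dimension. -/
def PDcat : Set (ModuleCat.{u} R) :=
  {M | Module.Finite R M ∧ ∃ n : ℕ, pdLE R n M}

/-- `MCM(R)` : maximal Cohen-Macaulay modules. -/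
def MCMcat : Set (ModuleCat.{u} R) :=
  {M | Module.Finite R M ∧ ∀ p : PrimeSpectrum R, heightE R p ≤ localDepth R p M}

/-- The nonfree locus of a module. -/
def NF (M : ModuleCat.{u} R) : Set (PrimeSpectrum R) :=
  {p | ¬ Module.Free (Localization.AtPrime p.asIdeal) (LocalizedModule p.asIdeal.primeCompl M)}

/-- The infinite projective dimension locus of a module. -/
def IPD (M : ModuleCat.{u} R) : Set (PrimeSpectrum R) :=
  {p | localPdim R p M = (⊤ : WithBot ℕ∞)}

/-- The infinite projective dimension locus of a collection of modules. -/
def IPDcat (𝒳 : Set (ModuleCat.{u} R)) : Set (PrimeSpectrum R) :=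
  ⋃ M ∈ 𝒳, IPD R M

/-- The modules in `mod R` whose infinite projective dimension locus lies in `W`. -/
def IPDinv (W : Set (PrimeSpectrum R)) : Set (ModuleCat.{u} R) :=
  {M | Module.Finite R M ∧ IPD R M ⊆ W}

/-- A specialization closed subset of `Spec R`. -/
def SpecClosed (W : Set (PrimeSpectrum R)) : Prop :=
  ∀ p ∈ W, ∀ q : PrimeSpectrum R, p.asIdeal ≤ q.asIdeal → q ∈ W

/-- Membership in `add 𝒳_p`: direct summands of localizations of finite direct sums
of members of `𝒳`. -/
def memAddLocal (𝒳 : Set (ModuleCat.{u} R)) (p : PrimeSpectrum R)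
    (N : ModuleCat.{u} (Localization.AtPrime p.asIdeal)) : Prop :=
  ∃ (n : ℕ) (X : Fin n → ModuleCat.{u} R), (∀ i, X i ∈ 𝒳) ∧
    ∃ (N' : ModuleCat.{u} (Localization.AtPrime p.asIdeal)),
      Nonempty ((↥N × ↥N') ≃ₗ[Localization.AtPrime p.asIdeal]
        ((i : Fin n) → LocalizedModule p.asIdeal.primeCompl (X i)))

/-- `K` is an `n`-th syzygy of `M` computed from a minimal free resolution over the
local ring `S`. -/
def IsMinSyz (S : Type u) [CommRing S] [IsLocalRing S] :
    ℕ → ModuleCat.{u} S → ModuleCat.{u} S → Prop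
  | 0, M, K => Nonempty (K ≃ₗ[S] M)
  | n+1, M, K => ∃ (F : ModuleCat.{u} S) (g : F →ₗ[S] M) (K' : ModuleCat.{u} S)
      (i : K' →ₗ[S] F),
      Module.Finite S F ∧ Module.Free S F ∧ Function.Surjective g ∧
      (LinearMap.ker g ≤ (IsLocalRing.maximalIdeal S) • (⊤ : Submodule S F)) ∧
      Function.Injective i ∧ LinearMap.range i = LinearMap.ker g ∧
      IsMinSyz S n K' K

/-- `K` is an `n`-th syzygy of `M` in some projective resolution (over any ring). -/
def IsSyz : ℕ → ModuleCat.{u} R → ModuleCat.{u} R → Prop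
  | 0, M, K => Nonempty (K ≃ₗ[R] M)
  | n+1, M, K => ∃ (F : ModuleCat.{u} R) (g : F →ₗ[R] M) (K' : ModuleCat.{u} R)
      (i : K' →ₗ[R] F),
      Module.Finite R F ∧ Module.Projective R F ∧ Function.Surjective g ∧
      Function.Injective i ∧ LinearMap.range i = LinearMap.ker g ∧
      IsSyz n K' K

/-- `T` is (isomorphic to) the Auslander transpose of `M`, computed from a minimal
free presentation over the local ring `S`. -/
def IsTranspose (S : Type u) [CommRing S] [IsLocalRing S] (M T : ModuleCat.{u} S) : Prop :=
  ∃ (F1 F0 : ModuleCat.{u} S) (d : F1 →ₗ[S] F0) (e : F0 →ₗ[S] M),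
    Module.Finite S F0 ∧ Module.Free S F0 ∧ Module.Finite S F1 ∧ Module.Free S F1 ∧
    Function.Surjective e ∧ LinearMap.range d = LinearMap.ker e ∧
    LinearMap.ker e ≤ (IsLocalRing.maximalIdeal S) • (⊤ : Submodule S F0) ∧
    LinearMap.ker d ≤ (IsLocalRing.maximalIdeal S) • (⊤ : Submodule S F1) ∧
    Nonempty (T ≃ₗ[S] ((Module.Dual S F1) ⧸ LinearMap.range d.dualMap))

/-- `T` is (isomorphic to) `Tr Ω^n M` over the local ring `S`. -/
def IsTrOmega (S : Type u) [CommRing S] [IsLocalRing S] (n : ℕ) (M T : ModuleCat.{u} S) :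
    Prop :=
  ∃ K : ModuleCat.{u} S, IsMinSyz S n M K ∧ IsTranspose S K T

/-- Resolving subcategory `𝒳` is dominant on `W ⊆ Spec R`. -/
def DominantOn (𝒳 : Set (ModuleCat.{u} R)) (W : Set (PrimeSpectrum R)) : Prop :=
  ∀ p ∈ W, ∃ (n : ℕ) (K : ModuleCat.{u} (Localization.AtPrime p.asIdeal)),
    IsMinSyz (Localization.AtPrime p.asIdeal) n
      (ModuleCat.of (Localization.AtPrime p.asIdeal)
        (IsLocalRing.ResidueField (Localization.AtPrime p.asIdeal))) K ∧
    memAddLocal R 𝒳 p K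

/-- Dominant resolving subcategory. -/
def Dominant (𝒳 : Set (ModuleCat.{u} R)) : Prop := DominantOn R 𝒳 Set.univ

/-- A (noetherian) local ring is Cohen-Macaulay if its depth equals its Krull dimension. -/
def IsCMLocalRing (S : Type u) [CommRing S] [IsLocalRing S] : Prop :=
  IsNoetherianRing S ∧
    ((depthE S (IsLocalRing.maximalIdeal S) S : WithBot ℕ∞) = ringKrullDim S)

/-- A regular local ring: a noetherian local ring whose maximal ideal is generated by
`dim S` elements. -/
def IsRegLocalRing (S : Type u) [CommRing S] [IsLocalRing S] : Prop :=
  IsNoetherianRing S ∧ ∃ s : Finset S,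
    Ideal.span (s : Set S) = IsLocalRing.maximalIdeal S ∧
    ringKrullDim S = (s.card : WithBot ℕ∞)

/-- The singular locus of `R`. -/
def SingLocus : Set (PrimeSpectrum R) :=
  {p | ¬ IsRegLocalRing (Localization.AtPrime p.asIdeal)}

/-- A hypersurface local ring: the completion is a quotient of a regular local ring by
one element. -/
def IsHypersurfaceLocalRing (S : Type u) [CommRing S] [IsLocalRing S] : Prop :=
  ∃ (T : Type u) (_ : CommRing T) (_ : IsLocalRing T) (f : T),
    IsRegLocalRing T ∧
    Nonempty ((AdicCompletion (IsLocalRing.maximalIdeal S) S) ≃+* (T ⧸ Ideal.span {f}))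

/-- A complete intersection local ring: the completion is a quotient of a regular local
ring by a regular sequence. -/
def IsCompleteIntersectionLocalRing (S : Type u) [CommRing S] [IsLocalRing S] : Prop :=
  ∃ (T : Type u) (_ : CommRing T) (_ : IsLocalRing T) (rs : List T),
    IsRegLocalRing T ∧ RingTheory.Sequence.IsRegular T rs ∧
    Nonempty ((AdicCompletion (IsLocalRing.maximalIdeal S) S) ≃+*
      (T ⧸ Ideal.ofList rs))

/-- The subquotient `A / (A ⊓ B)` of two submodules, used for homology. -/
def subquot {S M : Type u} [CommRing S] [AddCommGroup M] [Module S M]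
    (A B : Submodule S M) : Type u :=
  A ⧸ (B.comap A.subtype)

noncomputable instance {S M : Type u} [CommRing S] [AddCommGroup M] [Module S M]
    (A B : Submodule S M) : AddCommGroup (subquot A B) :=
  inferInstanceAs (AddCommGroup (A ⧸ (B.comap A.subtype)))

noncomputable instance {S M : Type u} [CommRing S] [AddCommGroup M] [Module S M]
    (A B : Submodule S M) : Module S (subquot A B) :=
  inferInstanceAs (Module S (A ⧸ (B.comap A.subtype)))

/-- `E` is (isomorphic to) `Ext^{j+1}_S(M, S)`, computed from a finite free resolution. -/
def IsExtPos (S : Type u) [CommRing S] (j : ℕ) (M E : ModuleCat.{u} S) : Prop :=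
  ∃ (F : ℕ → ModuleCat.{u} S) (d : ∀ i : ℕ, (F (i+1) : Type u) →ₗ[S] F i)
    (e : (F 0 : Type u) →ₗ[S] M),
    (∀ i, Module.Finite S (F i)) ∧ (∀ i, Module.Free S (F i)) ∧
    Function.Surjective e ∧ LinearMap.range (d 0) = LinearMap.ker e ∧
    (∀ i, LinearMap.range (d (i+1)) = LinearMap.ker (d i)) ∧
    Nonempty (E ≃ₗ[S]
      subquot (LinearMap.ker ((d (j+1)).dualMap)) (LinearMap.range ((d j).dualMap)))

/-- `T` is (isomorphic to) `Tor_n^S(M, N)`, computed from a projective resolution of `M`. -/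
def IsTor (S : Type u) [CommRing S] (n : ℕ) (M N T : ModuleCat.{u} S) : Prop :=
  ∃ (F : ℕ → ModuleCat.{u} S) (d : ∀ i : ℕ, (F (i+1) : Type u) →ₗ[S] F i)
    (e : (F 0 : Type u) →ₗ[S] M),
    (∀ i, Module.Projective S (F i)) ∧
    Function.Surjective e ∧ LinearMap.range (d 0) = LinearMap.ker e ∧
    (∀ i, LinearMap.range (d (i+1)) = LinearMap.ker (d i)) ∧
    (match n with
      | 0 => Nonempty (T ≃ₗ[S] TensorProduct S M N)
      | (j+1) => Nonempty (T ≃ₗ[S]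
          subquot (LinearMap.ker (LinearMap.rTensor (↥N) (d j)))
            (LinearMap.range (LinearMap.rTensor (↥N) (d (j+1))))))

/-- `idLE n M` : the injective dimension of `M` is at most `n`. -/
def idLE (S : Type u) [CommRing S] : ℕ → ModuleCat.{u} S → Prop
  | 0, M => Module.Injective S M
  | n+1, M => ∃ (I C : ModuleCat.{u} S) (f : M →ₗ[S] I) (g : I →ₗ[S] C),
      IsSES f g ∧ Module.Injective S I ∧ idLE S n C

/-- `PD_0^n(R)` over a local ring: modules of projective dimension at most `n` that are
free on the punctured spectrum. -/
def PD0n [IsLocalRing R] (n : ℕ) : Set (ModuleCat.{u} R) :=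
  {M | Module.Finite R M ∧ pdLE R n M ∧
    ∀ p : PrimeSpectrum R, p.asIdeal ≠ IsLocalRing.maximalIdeal R →
      Module.Free (Localization.AtPrime p.asIdeal) (LocalizedModule p.asIdeal.primeCompl M)}

/-- `PD_0(R)` over a local ring: modules of finite projective dimension that are
free on the punctured spectrum. -/
def PD0 [IsLocalRing R] : Set (ModuleCat.{u} R) :=
  {M | Module.Finite R M ∧ (∃ n : ℕ, pdLE R n M) ∧
    ∀ p : PrimeSpectrum R, p.asIdeal ≠ IsLocalRing.maximalIdeal R →
      Module.Free (Localization.AtPrime p.asIdeal) (LocalizedModule p.asIdeal.primeCompl M)}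

/-- The residue field of a local ring, as a bundled module. -/
noncomputable abbrev residueMod (S : Type u) [CommRing S] [IsLocalRing S] : ModuleCat.{u} S :=
  ModuleCat.of S (IsLocalRing.ResidueField S)

/-!
Let `P` be a resolution of `M = R ⧸ p` by finitely generated projectives. By Rees' theorem
`Ext i (M, R) = 0` for `i < f p ≤ grade p`, so the dual complex `0 → P 0ᵛ → P 1ᵛ → ⋯` is exact below
degree `n = f p`, and it resolves the cokernel `E` of `P (n - 1)ᵛ → P nᵛ`; hence `pd E ≤ n`.

If `p ⊈ q`, some `s ∉ q` kills `M`, so multiplication by `s` on `P` is null-homotopic and factors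
through a projective on `E`; thus `E_q` is projective and `pd E_q ≤ 0 ≤ f q`. If `p ⊆ q`, then
`pd E_q ≤ n ≤ f q` by monotonicity of `f`. Finally `pd E_p < n` would split `P 0ᵛ → P 1ᵛ` up to an
element `s ∉ p` (or let `s` kill `P 0ᵛ`, if `n = 0`); dualizing back, `s` would kill `M`.
-/

section ProjectiveDimension

variable {R}

theorem IsSES.exact {A B C : Type u} [AddCommGroup A] [Module R A] [AddCommGroup B] [Module R B]
    [AddCommGroup C] [Module R C] {f : A →ₗ[R] B} {g : B →ₗ[R] C} (h : IsSES f g) :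
    Function.Exact f g :=
  LinearMap.exact_iff.mpr h.2.2.symm

theorem IsSES.shortExact {K P M : ModuleCat.{u} R} {f : K →ₗ[R] P} {g : P →ₗ[R] M}
    (h : IsSES f g) :
    (ShortComplex.mk (ModuleCat.ofHom f) (ModuleCat.ofHom g)
      (ModuleCat.hom_ext h.exact.linearMap_comp_eq_zero)).ShortExact where
  exact := (ShortComplex.ShortExact.moduleCat_exact_iff_function_exact _).mpr h.exact
  mono_f := (ModuleCat.mono_iff_injective _).mpr h.1
  epi_g := (ModuleCat.epi_iff_surjective _).mpr h.2.1

theorem pdLE.hasProjectiveDimensionLE {n : ℕ} {M : ModuleCat.{u} R} (h : pdLE R n M) :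
    HasProjectiveDimensionLE M n := by
  induction n generalizing M with
  | zero =>
    exact (projective_iff_hasProjectiveDimensionLE_zero M).mp ((IsProjective.iff_projective M).mp h)
  | succ n ih =>
    obtain ⟨K, P, f, g, -, hP, hfg, hK⟩ := h
    exact (hfg.shortExact.hasProjectiveDimensionLT_X₃_iff n
      ((IsProjective.iff_projective P).mp hP)).mpr (ih hK)

theorem pdLE_iff_hasProjectiveDimensionLE [IsNoetherianRing R] {n : ℕ} {M : ModuleCat.{u} R}
    [Module.Finite R M] : pdLE R n M ↔ HasProjectiveDimensionLE M n := by
  refine ⟨pdLE.hasProjectiveDimensionLE, ?_⟩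
  induction n generalizing M with
  | zero =>
    exact fun h ↦ (IsProjective.iff_projective M).mpr
      ((projective_iff_hasProjectiveDimensionLE_zero M).mpr h)
  | succ n ih =>
    intro h
    obtain ⟨P, _, _, _, _, g, hg⟩ := Module.exists_finite_presentation R M
    have hses : IsSES (LinearMap.ker g).subtype g :=
      ⟨Subtype.val_injective, hg, Submodule.range_subtype _⟩
    refine ⟨ModuleCat.of R (LinearMap.ker g), ModuleCat.of R P, _, g, ‹_›, inferInstance, hses,
      ih ?_⟩
    exact (hses.shortExact (K := .of R _) (P := .of R _).hasProjectiveDimensionLT_X₃_iff n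
      ((IsProjective.iff_projective P).mp inferInstance)).mp h

theorem pdim_eq_projectiveDimension [IsNoetherianRing R] (M : ModuleCat.{u} R)
    [Module.Finite R M] : pdim R M = projectiveDimension M := by
  refine le_antisymm ?_ (le_sInf ?_)
  · match h : projectiveDimension M with
    | ⊥ =>
      exact sInf_le (Or.inl ⟨rfl, ModuleCat.isZero_iff_subsingleton.mp
        ((projectiveDimension_eq_bot_iff M).mp h)⟩)
    | ⊤ => exact le_top
    | (n : ℕ) =>
      exact sInf_le (Or.inr ⟨n, rfl, pdLE_iff_hasProjectiveDimensionLE.mpr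
        ((projectiveDimension_le_iff M n).mp h.le)⟩)
  · rintro _ (⟨rfl, hM⟩ | ⟨n, rfl, hn⟩)
    · exact ((projectiveDimension_eq_bot_iff M).mpr (ModuleCat.isZero_iff_subsingleton.mpr hM)).le
    · exact (projectiveDimension_le_iff M n).mpr hn.hasProjectiveDimensionLE

theorem localPdim_eq_projectiveDimension [IsNoetherianRing R] (M : ModuleCat.{u} R)
    [Module.Finite R M] (q : PrimeSpectrum R) :
    localPdim R q M = projectiveDimension (M.localizedModule q.asIdeal.primeCompl) := by
  have : IsNoetherianRing (Localization.AtPrime q.asIdeal) :=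
    IsLocalization.isNoetherianRing q.asIdeal.primeCompl _ inferInstance
  exact (pdim_eq_projectiveDimension _).trans (ModuleCat.projectiveDimension_eq_of_linearEquiv
    (Shrink.linearEquiv _ _).symm)

end ProjectiveDimension

section Localization

variable {R}

theorem projective_of_comp_eq_smul (S : Submonoid R) (Rₛ : Type*) [CommRing Rₛ] [Algebra R Rₛ]
    [IsLocalization S Rₛ] {M Mₛ P : Type*} [AddCommGroup M] [Module R M] [AddCommGroup Mₛ]
    [Module R Mₛ] [Module Rₛ Mₛ] [IsScalarTower R Rₛ Mₛ] (m : M →ₗ[R] Mₛ) [IsLocalizedModule S m]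
    [AddCommGroup P] [Module R P] [Module.Projective R P] {α : M →ₗ[R] P} {β : P →ₗ[R] M} (s : S)
    (hβα : β ∘ₗ α = s • LinearMap.id) : Module.Projective Rₛ Mₛ := by
  let p := TensorProduct.mk R Rₛ P 1
  have : IsLocalizedModule S p :=
    (isLocalizedModule_iff_isBaseChange S Rₛ p).mpr (TensorProduct.isBaseChange R P Rₛ)
  let αₛ := IsLocalizedModule.mapExtendScalars S m p Rₛ α
  let βₛ := IsLocalizedModule.mapExtendScalars S p m Rₛ β
  have hβαₛ : βₛ ∘ₗ αₛ = algebraMap R Rₛ s • LinearMap.id := by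
    refine LinearMap.restrictScalars_injective R (IsLocalizedModule.ext S m
      (IsLocalizedModule.map_units m) (LinearMap.ext fun x ↦ ?_))
    simpa [αₛ, βₛ, Submonoid.smul_def] using congr(m ($hβα x))
  refine Module.Projective.of_split αₛ (IsLocalization.mk' Rₛ 1 s • βₛ) ?_
  rw [LinearMap.smul_comp, hβαₛ, smul_smul, IsLocalization.mk'_spec, map_one, one_smul]

theorem exists_comp_eq_smul_of_projective (S : Submonoid R) (Rₛ : Type*) [CommRing Rₛ]
    [Algebra R Rₛ] [IsLocalization S Rₛ] {B C Cₛ : Type*} [AddCommGroup B] [Module R B]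
    [AddCommGroup C] [Module R C] [Module.FinitePresentation R C] [AddCommGroup Cₛ] [Module R Cₛ]
    [Module Rₛ Cₛ] [IsScalarTower R Rₛ Cₛ] [Module.Projective Rₛ Cₛ] (c : C →ₗ[R] Cₛ)
    [IsLocalizedModule S c] {g : B →ₗ[R] C} (hg : Function.Surjective g) :
    ∃ (s : S) (h : C →ₗ[R] B), g ∘ₗ h = s • LinearMap.id := by
  let b := TensorProduct.mk R Rₛ B 1
  have : IsLocalizedModule S b :=
    (isLocalizedModule_iff_isBaseChange S Rₛ b).mpr (TensorProduct.isBaseChange R B Rₛ)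
  let gₛ := IsLocalizedModule.mapExtendScalars S b c Rₛ g
  obtain ⟨σ, hσ⟩ := Module.projective_lifting_property gₛ LinearMap.id
    (IsLocalizedModule.map_surjective S b c g hg)
  obtain ⟨h, s, hs⟩ := Module.FinitePresentation.exists_lift_of_isLocalizedModule S b
    (σ.restrictScalars R ∘ₗ c)
  have hgh : c ∘ₗ (g ∘ₗ h) = c ∘ₗ (s • LinearMap.id) := by
    ext x
    calc c (g (h x)) = gₛ (b (h x)) := by simp [gₛ]
      _ = gₛ (s • σ (c x)) := congr(gₛ ($hs x))
      _ = s • gₛ (σ (c x)) := LinearMap.map_smul_of_tower _ _ _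
      _ = s • c x := congr(s • $hσ (c x))
      _ = c (s • x) := (c.map_smul_of_tower s x).symm
  obtain ⟨t, ht⟩ := Module.Finite.exists_smul_of_comp_eq_of_isLocalizedModule S c _ _ hgh
  exact ⟨t * s, t • h, by rw [LinearMap.comp_smul, ht, smul_smul]⟩

theorem exists_retraction_eq_smul_of_section {A B C : Type*} [AddCommGroup A] [Module R A]
    [AddCommGroup B] [Module R B] [AddCommGroup C] [Module R C] {f : A →ₗ[R] B} {g : B →ₗ[R] C}
    (hf : Function.Injective f) (hfg : Function.Exact f g) {s : R} {h : C →ₗ[R] B}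
    (hgh : g ∘ₗ h = s • LinearMap.id) : ∃ r : B →ₗ[R] A, r ∘ₗ f = s • LinearMap.id := by
  have hrange (b : B) : (s • LinearMap.id - h ∘ₗ g : B →ₗ[R] B) b ∈ LinearMap.range f := by
    refine (hfg _).mp ?_
    simpa [sub_eq_zero] using congr($hgh (g b)).symm
  refine ⟨(LinearEquiv.ofInjective f hf).symm ∘ₗ LinearMap.codRestrict _ _ hrange,
    LinearMap.ext fun a ↦ (LinearEquiv.ofInjective f hf).injective (Subtype.ext ?_)⟩
  simp [hfg.apply_apply_eq_zero]

theorem exists_comp_eq_smul_of_dualMap {A B : Type*} [AddCommGroup A] [Module R A] [AddCommGroup B]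
    [Module R B] [Module.IsReflexive R A] [Module.IsReflexive R B] {d : A →ₗ[R] B} {s : R}
    {r : Module.Dual R A →ₗ[R] Module.Dual R B} (hr : r ∘ₗ d.dualMap = s • LinearMap.id) :
    ∃ c : B →ₗ[R] A, d ∘ₗ c = s • LinearMap.id := by
  refine ⟨(Module.evalEquiv R A).symm ∘ₗ r.dualMap ∘ₗ Module.evalEquiv R B,
    LinearMap.ext fun b ↦ (Module.evalEquiv R B).injective (LinearMap.ext fun φ ↦ ?_)⟩
  exact (Module.apply_evalEquiv_symm_apply R A (d.dualMap φ) _).trans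
    (congr($hr φ b).trans (map_smul φ s b).symm)

end Localization

section Resolution

/-- The projective resolution given by an exact sequence
`⋯ ⟶ X 2 ⟶ X 1 ⟶ X 0 ⟶ Z ⟶ 0` of projective objects. -/
noncomputable def projectiveResolutionOfExact {C : Type*} [Category* C] [Abelian C] {Z : C}
    (X : ℕ → C) [∀ n, Projective (X n)] (d : ∀ n, X (n + 1) ⟶ X n) (π : X 0 ⟶ Z) [Epi π]
    (hπ : d 0 ≫ π = 0) (hd : ∀ n, d (n + 1) ≫ d n = 0)
    (hπ_exact : (ShortComplex.mk _ _ hπ).Exact)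
    (hd_exact : ∀ n, (ShortComplex.mk _ _ (hd n)).Exact) : ProjectiveResolution Z where
  complex := ChainComplex.of X d hd
  π := (ChainComplex.toSingle₀Equiv _ _).symm
    ⟨π, (congr($(ChainComplex.of_d X d 0) ≫ π)).trans hπ⟩
  quasiIso := ⟨fun n ↦ by
    have comm {A B : C} {f g : A ⟶ B} (h : f = g) : 𝟙 A ≫ g = f ≫ 𝟙 B := by simp [h]
    cases n with
    | zero =>
      rw [ChainComplex.quasiIsoAt₀_iff, ShortComplex.quasiIso_iff_of_zeros' _ rfl rfl rfl]
      refine (ShortComplex.exact_and_epi_g_iff_of_iso (S₂ := .mk _ _ hπ) ?_).mpr ⟨hπ_exact, ‹_›⟩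
      exact ShortComplex.isoMk (Iso.refl _) (Iso.refl _) (Iso.refl _)
        (comm (ChainComplex.of_d X d 0)) (comm (ChainComplex.toSingle₀Equiv_symm_apply_f_zero _ _))
    | succ n =>
      rw [quasiIsoAt_iff_exactAt' _ _ (ChainComplex.exactAt_succ_single_obj _ _),
        HomologicalComplex.exactAt_iff' _ (n + 1 + 1) (n + 1) n (by simp) (by simp)]
      refine (ShortComplex.exact_iff_of_iso (S₂ := .mk _ _ (hd n)) ?_).mpr (hd_exact n)
      exact ShortComplex.isoMk (Iso.refl _) (Iso.refl _) (Iso.refl _)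
        (comm (ChainComplex.of_d X d (n + 1))) (comm (ChainComplex.of_d X d n))⟩

variable {R}

theorem exists_finite_projective_epi (M : ModuleCat.{u} R) [Module.Finite R M] :
    ∃ (P : ModuleCat.{u} R) (π : P ⟶ M), Module.Finite R P ∧ Projective P ∧ Epi π := by
  obtain ⟨P, _, _, _, _, π, hπ⟩ := Module.exists_finite_presentation R M
  exact ⟨.of R P, ModuleCat.ofHom π, ‹_›, (IsProjective.iff_projective P).mp inferInstance,
    (ModuleCat.epi_iff_surjective _).mpr hπ⟩

theorem exists_projectiveResolution_finite [IsNoetherianRing R] (M : ModuleCat.{u} R)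
    [Module.Finite R M] :
    ∃ P : ProjectiveResolution M, ∀ n, Module.Finite R (P.complex.X n) := by
  choose cover π hfin hproj hepi using fun N : {N : ModuleCat.{u} R // Module.Finite R N} ↦
    have := N.2
    exists_finite_projective_epi N.1
  let Z : ℕ → {N : ModuleCat.{u} R // Module.Finite R N} := Nat.rec ⟨M, ‹_›⟩ fun _ N ↦
    ⟨.of R (LinearMap.ker (π N).hom), inferInstance⟩
  let ι (n : ℕ) : (Z (n + 1)).1 ⟶ cover (Z n) :=
    ModuleCat.ofHom (LinearMap.ker (π (Z n)).hom).subtype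
  have hπ (n : ℕ) : Function.Exact (π (Z (n + 1)) ≫ ι n) (π (Z n)) :=
    ((ModuleCat.epi_iff_surjective _).mp (hepi _)).comp_exact_iff_exact.mpr
      (LinearMap.exact_subtype_ker_map _)
  have hι (n : ℕ) : Function.Exact (π (Z (n + 2)) ≫ ι (n + 1)) (π (Z (n + 1)) ≫ ι n) :=
    (hπ (n + 1)).comp_injective _ Subtype.val_injective rfl
  exact ⟨projectiveResolutionOfExact (fun n ↦ cover (Z n)) (fun n ↦ π (Z (n + 1)) ≫ ι n)
    (π (Z 0)) (ModuleCat.hom_ext (hπ 0).linearMap_comp_eq_zero)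
    (fun n ↦ ModuleCat.hom_ext (hι n).linearMap_comp_eq_zero)
    ((ShortComplex.ShortExact.moduleCat_exact_iff_function_exact _).mpr (hπ 0))
    (fun n ↦ (ShortComplex.ShortExact.moduleCat_exact_iff_function_exact _).mpr (hι n)),
    fun n ↦ hfin (Z n)⟩

end Resolution

section DualComplex

variable {R}

/-- The cokernel of the differential `X (n - 1)ᵛ → X nᵛ` of the `R`-dual of a chain complex; for a
resolution of `R ⧸ p` and `n = f p` this is the module realizing `f` at `p`. For `n = 0` the
truncated subtraction makes the differential `0`, so the cokernel is `X 0ᵛ`. -/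
noncomputable def dualCoker (X : ChainComplex (ModuleCat.{u} R) ℕ) (n : ℕ) : ModuleCat.{u} R :=
  ModuleCat.of R (Module.Dual R (X.X n) ⧸ LinearMap.range (X.d n (n - 1)).hom.dualMap)

theorem dualMap_d_apply_dualMap_d_apply (X : ChainComplex (ModuleCat.{u} R) ℕ) (i j k : ℕ)
    (φ : Module.Dual R (X.X k)) : (X.d i j).hom.dualMap ((X.d j k).hom.dualMap φ) = 0 :=
  LinearMap.ext fun x ↦ congr(φ ($(X.d_comp_d i j k).hom x)).trans φ.map_zero

theorem function_exact_dualMap_d_of_subsingleton_ext {M : ModuleCat.{u} R}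
    (P : ProjectiveResolution M) (n : ℕ) [Subsingleton (Abelian.Ext M (ModuleCat.of R R) n)] :
    Function.Exact (P.complex.d n (n - 1)).hom.dualMap (P.complex.d (n + 1) n).hom.dualMap := by
  refine fun φ ↦ ⟨fun hφ ↦ ?_, ?_⟩
  · have hdφ : P.complex.d (n + 1) n ≫ ModuleCat.ofHom φ = 0 := ModuleCat.hom_ext hφ
    cases n with
    | zero =>
      obtain ⟨ψ, hψ⟩ : ∃ ψ : M ⟶ ModuleCat.of R R, P.π.f 0 ≫ ψ = ModuleCat.ofHom φ :=
        P.exact₀.desc' _ hdφ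
      have hψ_zero : ψ = 0 := (Abelian.Ext.mk₀_eq_zero_iff ψ).mp (Subsingleton.elim _ _)
      have hφ_zero : ModuleCat.ofHom φ = 0 :=
        hψ.symm.trans ((congrArg _ hψ_zero).trans Limits.comp_zero)
      exact ⟨0, (map_zero _).trans congr(($hφ_zero).hom).symm⟩
    | succ n =>
      obtain ⟨ψ, hψ⟩ := (P.extMk_eq_zero_iff (ModuleCat.ofHom φ) _ rfl hdφ n rfl).mp
        (Subsingleton.elim _ _)
      exact ⟨ψ.hom, congr(($hψ).hom)⟩
  · rintro ⟨ψ, rfl⟩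
    exact dualMap_d_apply_dualMap_d_apply _ _ _ _ ψ

variable (X : ChainComplex (ModuleCat.{u} R) ℕ)

instance (n : ℕ) [Module.Finite R (X.X n)] [Module.Projective R (X.X n)] :
    Module.Finite R (dualCoker X n) :=
  Module.Finite.quotient R (LinearMap.range (X.d n (n - 1)).hom.dualMap)

/-- The map from `dualCoker X n` to the dual of `X (n + 1)` induced by the differential; when the
dual complex is exact at `n`, it embeds `dualCoker X n` as a syzygy of `dualCoker X (n + 1)`. -/
noncomputable def dualCokerToDual (n : ℕ) : dualCoker X n →ₗ[R] Module.Dual R (X.X (n + 1)) :=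
  (LinearMap.range (X.d n (n - 1)).hom.dualMap).liftQ (X.d (n + 1) n).hom.dualMap <| by
    rintro _ ⟨φ, rfl⟩
    exact dualMap_d_apply_dualMap_d_apply _ _ _ _ φ

/-- The canonical projection of the dual of `X n` onto `dualCoker X n`. -/
noncomputable def dualCokerMk (n : ℕ) : Module.Dual R (X.X n) →ₗ[R] dualCoker X n :=
  (LinearMap.range (X.d n (n - 1)).hom.dualMap).mkQ

variable {X}

theorem dualCokerMk_surjective (n : ℕ) : Function.Surjective (dualCokerMk X n) :=
  Submodule.mkQ_surjective _

theorem function_exact_dualMap_d_dualCokerMk (n : ℕ) :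
    Function.Exact (X.d n (n - 1)).hom.dualMap (dualCokerMk X n) :=
  LinearMap.exact_map_mkQ_range _

theorem dualCokerToDual_comp_dualCokerMk (n : ℕ) :
    dualCokerToDual X n ∘ₗ dualCokerMk X n = (X.d (n + 1) n).hom.dualMap :=
  Submodule.liftQ_mkQ _ _ _

theorem isSES_dualCokerToDual_dualCokerMk {n : ℕ}
    (h : Function.Exact (X.d n (n - 1)).hom.dualMap (X.d (n + 1) n).hom.dualMap) :
    IsSES (dualCokerToDual X n) (dualCokerMk X (n + 1)) := by
  refine ⟨LinearMap.ker_eq_bot.mp ?_, dualCokerMk_surjective _, ?_⟩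
  · exact Submodule.ker_liftQ_eq_bot _ _ _ h.linearMap_ker_eq.le
  · exact (Submodule.range_liftQ _ _ _).trans (Submodule.ker_mkQ _).symm

theorem dualMap_d_zero : (X.d 0 0).hom.dualMap = 0 :=
  congr(($(X.shape 0 0 (by simp))).hom.dualMap).trans (LinearMap.ext fun φ ↦ φ.comp_zero)

theorem dualCokerMk_zero_injective : Function.Injective (dualCokerMk X 0) :=
  LinearMap.ker_eq_bot.mp ((function_exact_dualMap_d_dualCokerMk 0).linearMap_ker_eq.trans
    (LinearMap.range_eq_bot.mpr dualMap_d_zero))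

theorem projective_dualCoker_zero [Module.Finite R (X.X 0)] [Module.Projective R (X.X 0)] :
    Module.Projective R (dualCoker X 0) :=
  Module.Projective.of_equiv
    (LinearEquiv.ofBijective _ ⟨dualCokerMk_zero_injective, dualCokerMk_surjective 0⟩)

theorem hasProjectiveDimensionLE_dualCoker [∀ n, Module.Finite R (X.X n)]
    [∀ n, Module.Projective R (X.X n)] {n : ℕ} (h : ∀ i < n,
      Function.Exact (X.d i (i - 1)).hom.dualMap (X.d (i + 1) i).hom.dualMap) :
    HasProjectiveDimensionLE (dualCoker X n) n := by
  induction n with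
  | zero =>
    exact (projective_iff_hasProjectiveDimensionLE_zero _).mp
      ((IsProjective.iff_projective _).mp projective_dualCoker_zero)
  | succ n ih =>
    exact ((isSES_dualCokerToDual_dualCokerMk (h n n.lt_add_one)).shortExact
      (P := .of R _).hasProjectiveDimensionLT_X₃_iff n
      ((IsProjective.iff_projective _).mp Module.dual_projective)).mpr
      (ih fun i hi ↦ h i (hi.trans n.lt_add_one))

-- Dualizing a null-homotopy of multiplication by `s` on `X` makes multiplication by `s` on the
-- cokernel factor through the dual of `X (n + 1)`.
theorem dualCokerMk_comp_dualMap_comp_dualCokerToDual {n : ℕ} {s : R}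
    {h : X.X n →ₗ[R] X.X (n + 1)} {h' : X.X (n - 1) →ₗ[R] X.X n}
    (hs : h' ∘ₗ (X.d n (n - 1)).hom + (X.d (n + 1) n).hom ∘ₗ h = s • LinearMap.id) :
    (dualCokerMk X n ∘ₗ h.dualMap) ∘ₗ dualCokerToDual X n = s • LinearMap.id := by
  refine (LinearMap.cancel_right (dualCokerMk_surjective n)).mp (LinearMap.ext fun φ ↦ ?_)
  have hφ : (X.d n (n - 1)).hom.dualMap (h'.dualMap φ) + h.dualMap ((X.d (n + 1) n).hom.dualMap φ) =
      s • φ := LinearMap.ext fun x ↦ by simpa using! congr(φ ($hs x))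
  calc dualCokerMk X n (h.dualMap (dualCokerToDual X n (dualCokerMk X n φ)))
      = dualCokerMk X n (h.dualMap ((X.d (n + 1) n).hom.dualMap φ)) :=
        congr(dualCokerMk X n (h.dualMap ($(dualCokerToDual_comp_dualCokerMk n) φ)))
    _ = dualCokerMk X n (s • φ) := by
        rw [← hφ, map_add, (function_exact_dualMap_d_dualCokerMk n).apply_apply_eq_zero, zero_add]
    _ = s • dualCokerMk X n φ := map_smul _ s φ

theorem exists_homotopy_of_smul_eq_zero {M : ModuleCat.{u} R} (P : ProjectiveResolution M) {s : R}
    (hs : ∀ x : M, s • x = 0) (n : ℕ) :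
    ∃ (h : P.complex.X n →ₗ[R] P.complex.X (n + 1)) (h' : P.complex.X (n - 1) →ₗ[R] P.complex.X n),
      h' ∘ₗ (P.complex.d n (n - 1)).hom + (P.complex.d (n + 1) n).hom ∘ₗ h =
        s • LinearMap.id := by
  have hπ : (s • 𝟙 P.complex) ≫ P.π = 0 := by
    refine HomologicalComplex.to_single_hom_ext (ModuleCat.hom_ext (LinearMap.ext fun x ↦ ?_))
    exact (map_smul (P.π.f 0).hom s x).trans (hs _)
  let H : Homotopy (s • 𝟙 P.complex) 0 := ProjectiveResolution.liftHomotopyZero _ hπ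
  refine ⟨(H.hom n (n + 1)).hom, (H.hom (n - 1) n).hom, ?_⟩
  have hcomm := H.comm n
  rw [dNext_nat, Homotopy.prevD_chainComplex] at hcomm
  simpa using congr(($hcomm).hom).symm

theorem projective_localizedModule_dualCoker {M : ModuleCat.{u} R} (P : ProjectiveResolution M)
    (S : Submonoid R) (s : S) (hs : ∀ x : M, s • x = 0) (n : ℕ)
    [Module.Finite R (P.complex.X (n + 1))] :
    Module.Projective (Localization S) ((dualCoker P.complex n).localizedModule S) := by
  obtain ⟨h, h', hh⟩ := exists_homotopy_of_smul_eq_zero P hs n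
  have := ModuleCat.projective_of_categoryTheory_projective (P.complex.X (n + 1))
  exact projective_of_comp_eq_smul S _ ((dualCoker P.complex n).localizedModuleMkLinearMap S) s
    (dualCokerMk_comp_dualMap_comp_dualCokerToDual hh)

theorem smul_eq_zero_of_comp_dualMap_eq_smul {M : ModuleCat.{u} R} (P : ProjectiveResolution M)
    [Module.Finite R (P.complex.X 0)] [Module.Finite R (P.complex.X 1)] {s : R}
    {r : Module.Dual R (P.complex.X 1) →ₗ[R] Module.Dual R (P.complex.X 0)}
    (hr : r ∘ₗ (P.complex.d 1 0).hom.dualMap = s • LinearMap.id) (x : M) : s • x = 0 := by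
  have := ModuleCat.projective_of_categoryTheory_projective (P.complex.X 0)
  have := ModuleCat.projective_of_categoryTheory_projective (P.complex.X 1)
  obtain ⟨c, hc⟩ := exists_comp_eq_smul_of_dualMap hr
  obtain ⟨y, rfl⟩ := (ModuleCat.epi_iff_surjective (P.π.f 0)).mp inferInstance x
  calc s • P.π.f 0 y = P.π.f 0 (s • y) := (map_smul (P.π.f 0).hom s y).symm
    _ = P.π.f 0 (P.complex.d 1 0 (c y)) := congr(P.π.f 0 ($hc y)).symm
    _ = 0 := congr(($(P.complex_d_comp_π_f_zero)).hom (c y))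

theorem exists_smul_eq_zero_of_isZero_localizedModule_dualCoker_zero {M : ModuleCat.{u} R}
    (P : ProjectiveResolution M) [Module.Finite R (P.complex.X 0)]
    [Module.Finite R (P.complex.X 1)] (S : Submonoid R)
    (h : Limits.IsZero ((dualCoker P.complex 0).localizedModule S)) :
    ∃ s : S, ∀ x : M, s • x = 0 := by
  have := ModuleCat.projective_of_categoryTheory_projective (P.complex.X 0)
  have := ModuleCat.isZero_iff_subsingleton.mp h
  obtain ⟨s, hs⟩ := Module.Finite.exists_smul_of_comp_eq_of_isLocalizedModule S
    ((dualCoker P.complex 0).localizedModuleMkLinearMap S) LinearMap.id 0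
    (LinearMap.ext fun _ ↦ Subsingleton.elim _ _)
  have hs_zero : (0 : Module.Dual R (P.complex.X 1) →ₗ[R] Module.Dual R (P.complex.X 0)) ∘ₗ
      (P.complex.d 1 0).hom.dualMap = (s : R) • LinearMap.id := by
    refine LinearMap.ext fun φ ↦ dualCokerMk_zero_injective ?_
    simpa using! congr($hs (dualCokerMk P.complex 0 φ)).symm
  exact ⟨s, smul_eq_zero_of_comp_dualMap_eq_smul P hs_zero⟩

-- Up to some `s ∈ S` the projection onto `dualCoker X 1` has a section, so the dual of `d 1 0` has
-- a retraction, and by reflexivity `s • X 0` lies in the image of `d 1 0`.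
theorem exists_smul_eq_zero_of_projective_localizedModule_dualCoker_one [IsNoetherianRing R]
    {M : ModuleCat.{u} R} (P : ProjectiveResolution M) [Module.Finite R (P.complex.X 0)]
    [Module.Finite R (P.complex.X 1)] (S : Submonoid R)
    (h₀ : Function.Exact (P.complex.d 0 0).hom.dualMap (P.complex.d 1 0).hom.dualMap)
    [Module.Projective (Localization S) ((dualCoker P.complex 1).localizedModule S)] :
    ∃ s : S, ∀ x : M, s • x = 0 := by
  have := ModuleCat.projective_of_categoryTheory_projective (P.complex.X 0)
  have := ModuleCat.projective_of_categoryTheory_projective (P.complex.X 1)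
  have := Module.finitePresentation_of_finite R (dualCoker P.complex 1)
  obtain ⟨s, h, hs⟩ := exists_comp_eq_smul_of_projective S (Localization S)
    ((dualCoker P.complex 1).localizedModuleMkLinearMap S) (dualCokerMk_surjective 1)
  have hinj : Function.Injective (P.complex.d 1 0).hom.dualMap := by
    refine (injective_iff_map_eq_zero _).mpr fun φ hφ ↦ ?_
    obtain ⟨ψ, rfl⟩ := (h₀ φ).mp hφ
    exact congr($dualMap_d_zero ψ)
  obtain ⟨r, hr⟩ := exists_retraction_eq_smul_of_section (s := (s : R)) hinj
    (function_exact_dualMap_d_dualCokerMk 1) hs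
  exact ⟨s, smul_eq_zero_of_comp_dualMap_eq_smul P hr⟩

theorem hasProjectiveDimensionLT_localizedModule_dualCoker_succ_iff
    {X : ChainComplex (ModuleCat.{u} R) ℕ} (S : Submonoid R) {n : ℕ}
    [Module.Finite R (X.X (n + 1))] [Module.Projective R (X.X (n + 1))]
    (h : Function.Exact (X.d n (n - 1)).hom.dualMap (X.d (n + 1) n).hom.dualMap) (m : ℕ) :
    HasProjectiveDimensionLT ((dualCoker X (n + 1)).localizedModule S) (m + 2) ↔
      HasProjectiveDimensionLT ((dualCoker X n).localizedModule S) (m + 1) := by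
  have hproj : Projective (ModuleCat.of R (Module.Dual R (X.X (n + 1)))) :=
    (IsProjective.iff_projective _).mp Module.dual_projective
  exact ((isSES_dualCokerToDual_dualCokerMk h).shortExact (P := .of R _).map_of_exact
    (ModuleCat.localizedModuleFunctor S)).hasProjectiveDimensionLT_X₃_iff m
      ((ModuleCat.localizedModuleFunctor S).projective_obj_of_projective hproj)

theorem exists_smul_eq_zero_of_hasProjectiveDimensionLT_localizedModule_dualCoker
    [IsNoetherianRing R] {M : ModuleCat.{u} R} (P : ProjectiveResolution M)
    [∀ n, Module.Finite R (P.complex.X n)] (S : Submonoid R) {n : ℕ}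
    (hexact : ∀ i < n, Function.Exact (P.complex.d i (i - 1)).hom.dualMap
      (P.complex.d (i + 1) i).hom.dualMap)
    (hn : HasProjectiveDimensionLT ((dualCoker P.complex n).localizedModule S) n) :
    ∃ s : S, ∀ x : M, s • x = 0 := by
  induction n with
  | zero =>
    exact exists_smul_eq_zero_of_isZero_localizedModule_dualCoker_zero P S
      ((hasProjectiveDimensionLT_zero_iff_isZero _).mp hn)
  | succ n ih =>
    cases n with
    | zero =>
      have : Module.Projective (Localization S) ((dualCoker P.complex 1).localizedModule S) :=
        (IsProjective.iff_projective _).mpr (projective_iff_hasProjectiveDimensionLT_one.mpr hn)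
      exact exists_smul_eq_zero_of_projective_localizedModule_dualCoker_one P S (hexact 0 one_pos)
    | succ n =>
      have := ModuleCat.projective_of_categoryTheory_projective (P.complex.X (n + 2))
      exact ih (fun i hi ↦ hexact i (hi.trans (Nat.lt_add_one _)))
        ((hasProjectiveDimensionLT_localizedModule_dualCoker_succ_iff S
          (hexact (n + 1) (Nat.lt_add_one _)) n).mp hn)

theorem exists_projectiveDimension_localizedModule_eq [IsNoetherianRing R] (M : ModuleCat.{u} R)
    [Module.Finite R M] (n : ℕ)
    (hM : ∀ i < n, Subsingleton (Abelian.Ext M (ModuleCat.of R R) i)) :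
    ∃ E : ModuleCat.{u} R, Module.Finite R E ∧ projectiveDimension E ≤ n ∧
      (∀ S : Submonoid R, (∃ s ∈ S, s ∈ Module.annihilator R M) →
        projectiveDimension (E.localizedModule S) ≤ (0 : ℕ)) ∧
      ∀ S : Submonoid R, ¬ (∃ s ∈ S, s ∈ Module.annihilator R M) →
        projectiveDimension (E.localizedModule S) = n := by
  obtain ⟨P, hP⟩ := exists_projectiveResolution_finite M
  have hproj (i : ℕ) := ModuleCat.projective_of_categoryTheory_projective (P.complex.X i)
  have hexact (i : ℕ) (hi : i < n) :=
    have := hM i hi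
    function_exact_dualMap_d_of_subsingleton_ext P i
  have hE := (projectiveDimension_le_iff _ _).mpr (hasProjectiveDimensionLE_dualCoker hexact)
  refine ⟨dualCoker P.complex n, inferInstance, hE, fun S ⟨s, hsS, hs⟩ ↦ ?_,
    fun S hS ↦ le_antisymm ?_ ?_⟩
  · rw [projectiveDimension_le_iff, ← projective_iff_hasProjectiveDimensionLE_zero,
      ← IsProjective.iff_projective]
    exact projective_localizedModule_dualCoker P S ⟨s, hsS⟩ (Module.mem_annihilator.mp hs) n
  · exact (ModuleCat.projectiveDimension_le_projectiveDimension_of_isLocalizedModule S _).trans hE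
  · rw [projectiveDimension_ge_iff]
    intro hlt
    obtain ⟨s, hs⟩ :=
      exists_smul_eq_zero_of_hasProjectiveDimensionLT_localizedModule_dualCoker P S hexact hlt
    exact hS ⟨s, s.2, Module.mem_annihilator.mpr hs⟩

end DualComplex

section Grade

variable {R}

theorem subsingleton_ext_of_lt_gradeE [IsNoetherianRing R] {I : Ideal R} (hI : I ≠ ⊤)
    (N : ModuleCat.{u} R) [Module.Finite R N]
    (hN : Module.support R N ⊆ PrimeSpectrum.zeroLocus I) {i : ℕ} (hi : (i : ℕ∞) < gradeE R I) :
    Subsingleton (Abelian.Ext N (ModuleCat.of R R) i) := by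
  obtain ⟨_, ⟨rs, hrs, hreg, rfl⟩, hlt⟩ := lt_sSup_iff.mp hi
  have hI_lt : I • (⊤ : Ideal R) < ⊤ := by simpa [lt_top_iff_ne_top] using hI
  have hrs_le : Ideal.ofList rs ≤ I := Ideal.span_le.mpr hrs
  refine ModuleCat.subsingleton_ext_of_exists_isRegular I N hN (.of R R) hI_lt rs hrs
    ⟨hreg, fun h ↦ ?_⟩ i (by exact_mod_cast hlt)
  exact (h.trans_le (Submodule.smul_mono_left hrs_le)).not_gt hI_lt

end Grade

/-- Lemma 5.4: for a grade consistent function `f` and a prime `p` there is a module `E`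
of finite projective dimension with `pd E_q ≤ f(q)` for all `q` and `pd E_p = f(p)`. -/
theorem exists_module_realizing_grade_consistent [IsNoetherianRing R]
    (f : PrimeSpectrum R → ℕ) (hf : GradeConsistent R f) (p : PrimeSpectrum R) :
    ∃ E : ModuleCat.{u} R, Module.Finite R E ∧
      pdim R E ≠ (⊤ : WithBot ℕ∞) ∧
      (∀ q : PrimeSpectrum R, localPdim R q E ≤ ((f q : ℕ∞) : WithBot ℕ∞)) ∧
      localPdim R p E = ((f p : ℕ∞) : WithBot ℕ∞) := by
  have hann : Module.annihilator R (R ⧸ p.asIdeal) = p.asIdeal := Ideal.annihilator_quotient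
  obtain ⟨E, hE, hpd, hpd_zero, hpd_eq⟩ := exists_projectiveDimension_localizedModule_eq
    (ModuleCat.of R (R ⧸ p.asIdeal)) (f p) fun i hi ↦
      subsingleton_ext_of_lt_gradeE p.2.ne_top _ (by rw [Module.support_eq_zeroLocus, hann])
        ((Nat.cast_lt.mpr hi).trans_le (hf.1 p))
  rw [hann] at hpd_zero hpd_eq
  refine ⟨E, hE, ?_, fun q ↦ ?_, ?_⟩
  · rw [pdim_eq_projectiveDimension]
    exact (hpd.trans_lt (WithBot.coe_lt_coe.mpr (ENat.natCast_lt_top _))).ne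
  · rw [localPdim_eq_projectiveDimension]
    by_cases hpq : p.asIdeal ≤ q.asIdeal
    · exact (hpd_eq _ fun ⟨_, hsq, hsp⟩ ↦ hsq (hpq hsp)).trans_le
        (by exact_mod_cast hf.2 p q hpq)
    · obtain ⟨s, hsp, hsq⟩ := SetLike.not_le_iff_exists.mp hpq
      exact (hpd_zero _ ⟨s, hsq, hsp⟩).trans (by exact_mod_cast (f q).zero_le)
  · rw [localPdim_eq_projectiveDimension]
    exact hpd_eq _ fun ⟨_, hsq, hsp⟩ ↦ hsq hsp

end ResolvPaper
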